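/- The sequence (s_n)_{n≥1} of numbers of simple permutations is not P-recursive. -/

import Mathlib

def IsPermBlock {n : ℕ} (π : Equiv.Perm (Fin n)) (B : Finset (Fin n)) : Prop :=
  B.Nonempty ∧ (∃ i j : Fin n, B = Finset.Icc i j) ∧
    ∃ a b : Fin n, B.image π = Finset.Icc a b

def IsSimplePerm {n : ℕ} (π : Equiv.Perm (Fin n)) : Prop :=
  ∀ B : Finset (Fin n), IsPermBlock π B → B.card = 1 ∨ B = Finset.univ

noncomputable def simpleCount (n : ℕ) : ℕ :=
  Nat.card {π : Equiv.Perm (Fin n) // IsSimplePerm π}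

/-- A sequence `(aₙ)_{n≥1}` of rationals is P-recursive if there are polynomials
`p₀, …, p_d ∈ ℚ[x]` with `p_d ≠ 0` such that
`p₀(n)aₙ + p₁(n)a_{n+1} + ⋯ + p_d(n)a_{n+d} = 0` for all `n ≥ 1`. -/
def IsPRecursive (a : ℕ → ℚ) : Prop :=
  ∃ (d : ℕ) (p : ℕ → Polynomial ℚ), p d ≠ 0 ∧
    ∀ n : ℕ, 1 ≤ n →
      ∑ i ∈ Finset.range (d + 1), (p i).eval (n : ℚ) * a (n + i) = 0

/-!
Let `F = ∑_{n ≥ 1} n! Xⁿ` and let `S` be the generating function of the simple permutations. Every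
permutation of length at least `2` is sum-decomposable, skew-decomposable, or an inflation of a
unique simple permutation of length at least `3`. Counting inflations turns this into an identity
`S(F) + X = R(F)` with `R` rational.

Suppose that `S` satisfies a linear differential equation over `ℚ[X]`, and substitute `F`. With
`θ = X d/dX` and `∂ = X² d/dX`, the identities `∂F = L(X, F)`, where `L(X, Y) = (1 - X) Y - X`, and
`∂(g(F)) = (∂F / F) (θg)(F)` express `(θᵏS)(F)` as a rational function of `X` and `F`. The first `θ`
creates a simple pole along the curve `L = 0`, and each further one raises its order by `2`, because
it combines a differentiation with a division by `L`. So the term of highest order in the equation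
cannot be cancelled by the others, nor by a polynomial in `F`.

Speaking of poles requires that `F` be transcendental over `ℚ(X)`. It is: since `∂F = L(X, F)` is
irregular singular at the origin, an algebraic power series solution would be rational, which the
growth of `n!` rules out.
-/

open Polynomial
open scoped PowerSeries

section LinearDifferentialEquation

open scoped Differential

variable {R S : Type*} [CommRing R] [Differential R] [CommRing S] [Differential S]
  [Algebra R S] [DifferentialAlgebra R S]

theorem coeff_implicitDeriv_linear (α β : R) (P : R[X]) (n : ℕ) :
    (Differential.implicitDeriv (C α * X + C β) P).coeff n =
      (P.coeff n)′ + n * α * P.coeff n + (n + 1) * β * P.coeff (n + 1) := by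
  rw [Differential.implicitDeriv]
  rcases n with _ | n
  · simp [add_mul, mul_assoc, coeff_derivative]
  · simp only [Derivation.coe_add, Derivation.coe_smul, Pi.add_apply, Pi.smul_apply,
      Derivation.restrictScalars_apply, derivative'_apply, smul_eq_mul, add_mul, mul_assoc,
      coeff_add, Differential.coeff_mapCoeffs, coeff_C_mul, coeff_X_mul, coeff_derivative,
      Nat.cast_add, Nat.cast_one, one_mul]
    ring

theorem leadingCoeff_mul_implicitDeriv_eq_of_minimal {f : S} {α β : R} {P : R[X]}
    (hf' : f′ = algebraMap R S α * f + algebraMap R S β) (hP : aeval f P = 0)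
    (hmin : ∀ Q : R[X], Q ≠ 0 → aeval f Q = 0 → P.natDegree ≤ Q.natDegree) :
    C P.leadingCoeff * Differential.implicitDeriv (C α * X + C β) P =
      C ((Differential.implicitDeriv (C α * X + C β) P).coeff P.natDegree) * P := by
  set D := Differential.implicitDeriv (C α * X + C β) with hD
  rw [← sub_eq_zero]
  by_contra hne
  have hDP : aeval f (D P) = 0 := by
    rw [hD, ← Differential.deriv_aeval_eq_implicitDeriv f _ (by simpa using hf'), hP, map_zero]
  have hdeg := hmin _ hne (by simp [hDP, hP])
  refine leadingCoeff_ne_zero.2 hne ?_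
  rw [leadingCoeff, coeff_sub, coeff_C_mul, coeff_C_mul]
  rcases hdeg.eq_or_lt with heq | hlt
  · rw [← heq, leadingCoeff, mul_comm, sub_self]
  · rw [hD, coeff_implicitDeriv_linear, coeff_eq_zero_of_natDegree_lt hlt,
      coeff_eq_zero_of_natDegree_lt (hlt.trans (Nat.lt_succ_self _))]
    simp

theorem exists_mul_deriv_eq_of_isAlgebraic [IsDomain R] [CharZero R] [FaithfulSMul R S]
    {f : S} {α β : R} (hf : IsAlgebraic R f)
    (hf' : f′ = algebraMap R S α * f + algebraMap R S β) :
    ∃ a b : R, a ≠ 0 ∧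
      algebraMap R S a * (algebraMap R S a * f + algebraMap R S b)′ =
        algebraMap R S (a′ + α * a) * (algebraMap R S a * f + algebraMap R S b) := by
  obtain ⟨P, ⟨hP, hPf⟩, hmin⟩ := exists_minimalFor_of_wellFoundedLT
    (fun P : R[X] => P ≠ 0 ∧ aeval f P = 0) natDegree hf
  obtain ⟨e, he⟩ : ∃ e, P.natDegree = e + 1 := by
    refine Nat.exists_eq_add_one_of_ne_zero fun h0 => hP ?_
    rw [eq_C_of_natDegree_eq_zero h0, aeval_C, FaithfulSMul.algebraMap_eq_zero_iff] at hPf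
    rw [eq_C_of_natDegree_eq_zero h0, hPf, C_0]
  have hlead : P.coeff (e + 1) = P.leadingCoeff := by rw [← he, leadingCoeff]
  have htop : P.coeff (e + 1 + 1) = 0 := coeff_eq_zero_of_natDegree_lt (by lia)
  -- The wanted relation is the equality of the coefficients of degree `e`.
  have hcoeff := congr_arg (coeff · e) (leadingCoeff_mul_implicitDeriv_eq_of_minimal hf' hPf
    fun Q hQ hQf => (le_total _ _).elim (hmin ⟨hQ, hQf⟩) id)
  simp only [coeff_C_mul, coeff_implicitDeriv_linear, he, hlead, htop] at hcoeff
  refine ⟨(e + 1 : ℕ) * P.leadingCoeff, P.coeff e,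
    mul_ne_zero (Nat.cast_ne_zero.2 e.succ_ne_zero) (leadingCoeff_ne_zero.2 hP), ?_⟩
  have hmap := congr_arg (algebraMap R S) hcoeff
  simp only [map_add, map_mul, ← deriv_algebraMap, map_natCast, map_zero] at hmap ⊢
  simp only [map_one, Nat.cast_add, Nat.cast_one, mul_zero, add_zero, Derivation.leibniz, hf',
    smul_eq_mul, map_add, Derivation.map_natCast, Derivation.map_one_eq_zero] at hmap ⊢
  linear_combination (e + 1 : S) * hmap

end LinearDifferentialEquation

section IrregularSingularity

open scoped Differential

variable {K : Type*} [CommRing K]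

/-- The differential ring structure on `A` given by an arbitrary derivation; `Differential` itself
asks for a `ℤ`-linear one. -/
@[reducible]
def differentialOfDerivation {A : Type*} [CommRing A] [Algebra K A] (d : Derivation K A A) :
    Differential A :=
  ⟨Derivation.mk' (d : A →ₗ[K] A).toAddMonoidHom.toIntLinearMap fun a b => d.leibniz a b⟩

/-- The derivation `X² d/dX` of `K[X]`. -/
@[reducible]
noncomputable def polynomialSqDifferential : Differential K[X] :=
  differentialOfDerivation ((X : K[X]) ^ 2 • derivative')

/-- The derivation `X² d/dX` of `K⟦X⟧`, for which a formal power series satisfying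
`X² f' = α f + β` with `α(0) ≠ 0` has an irregular singularity at the origin. -/
@[reducible]
noncomputable def powerSeriesSqDifferential : Differential K⟦X⟧ :=
  differentialOfDerivation ((PowerSeries.X : K⟦X⟧) ^ 2 • PowerSeries.derivative K)

attribute [local instance] polynomialSqDifferential powerSeriesSqDifferential

theorem polynomial_sqDeriv (p : K[X]) : p′ = X ^ 2 * derivative p := rfl

theorem powerSeries_sqDeriv (f : K⟦X⟧) :
    f′ = PowerSeries.X ^ 2 * PowerSeries.derivative K f := rfl

theorem algebraMap_polynomial_powerSeries (p : K[X]) : algebraMap K[X] K⟦X⟧ p = p := by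
  rw [PowerSeries.algebraMap_apply', Algebra.algebraMap_self, PowerSeries.map_id, id]

theorem sqDifferentialAlgebra : DifferentialAlgebra K[X] K⟦X⟧ where
  deriv_algebraMap p := by
    simp [algebraMap_polynomial_powerSeries, polynomial_sqDeriv, powerSeries_sqDeriv,
      PowerSeries.derivative_coe]

attribute [local instance] sqDifferentialAlgebra

theorem faithfulSMul_polynomial_powerSeries : FaithfulSMul K[X] K⟦X⟧ :=
  (faithfulSMul_iff_algebraMap_injective _ _).2 fun p q h =>
    coe_injective K (by simpa only [algebraMap_polynomial_powerSeries] using h)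

attribute [local instance] faithfulSMul_polynomial_powerSeries

theorem order_add_one_le_order_sqDeriv (f : K⟦X⟧) : f.order + 1 ≤ (f′).order := by
  refine PowerSeries.le_order _ _ fun n hn => ?_
  rw [powerSeries_sqDeriv, PowerSeries.coeff_X_pow_mul']
  split_ifs with h
  · obtain ⟨m, rfl⟩ := Nat.exists_eq_add_of_le' h
    have hm : ((m + 1 : ℕ) : ℕ∞) < f.order := by
      rw [show m + 2 = m + 1 + 1 from rfl, Nat.cast_add_one (m + 1)] at hn
      exact lt_of_add_lt_add_right hn
    rw [Nat.add_sub_cancel, PowerSeries.coeff_derivative, PowerSeries.coeff_of_lt_order _ hm,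
      zero_mul]
  · rfl

/-- On the left the order rises by at least one, on the right it is that of `a * h`. -/
theorem eq_zero_of_mul_sqDeriv_eq [IsDomain K] {a h α : K⟦X⟧} (ha : a ≠ 0)
    (hα : PowerSeries.constantCoeff α ≠ 0) (hah : a * h′ = (a′ + α * a) * h) : h = 0 := by
  by_contra hh
  have hα' : α.order = 0 := by
    rwa [← not_ne_iff, PowerSeries.order_ne_zero_iff_constCoeff_eq_zero]
  have hle : a.order + h.order + 1 ≤ (α * a * h).order := by
    rw [show α * a * h = a * h′ + -(a′ * h) by linear_combination -hah]
    refine le_trans (le_min ?_ ?_) (PowerSeries.min_order_le_order_add _ _)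
    · rw [PowerSeries.order_mul, add_assoc]
      gcongr
      exact order_add_one_le_order_sqDeriv h
    · rw [PowerSeries.order_neg, PowerSeries.order_mul, add_right_comm]
      gcongr
      exact order_add_one_le_order_sqDeriv a
  rw [PowerSeries.order_mul, PowerSeries.order_mul, hα', zero_add] at hle
  rw [← PowerSeries.order_mul] at hle
  have hfin := PowerSeries.order_finite_iff_ne_zero.2 (mul_ne_zero ha hh)
  exact lt_irrefl _ ((ENat.add_one_le_iff hfin.ne).1 hle)

theorem transcendental_of_sqDeriv_eq [IsDomain K] [CharZero K] {f : K⟦X⟧} {α β : K[X]}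
    (hα : α.coeff 0 ≠ 0) (hf' : f′ = algebraMap K[X] K⟦X⟧ α * f + algebraMap K[X] K⟦X⟧ β)
    (hf : ∀ p q : K[X], (q * f : K⟦X⟧) = p → q = 0) : Transcendental K[X] f := by
  intro halg
  obtain ⟨a, b, ha, hab⟩ := exists_mul_deriv_eq_of_isAlgebraic halg hf'
  refine ha (hf (-b) a ?_)
  rw [map_add (algebraMap K[X] K⟦X⟧), map_mul (algebraMap K[X] K⟦X⟧), ← deriv_algebraMap] at hab
  simp only [algebraMap_polynomial_powerSeries] at hab
  have := eq_zero_of_mul_sqDeriv_eq (mt (coe_eq_zero_iff).1 ha) (by simpa using hα) hab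
  rw [coe_neg]
  linear_combination this

end IrregularSingularity

section FactorialSeries

open Filter Topology

theorem tendsto_div_add_succ {K : Type*} [Field K] [TopologicalSpace K] [IsTopologicalRing K]
    {u : ℕ → K} (hu : ∀ᶠ n in atTop, u n ≠ 0)
    (hlim : Tendsto (fun n => u n / u (n + 1)) atTop (𝓝 0)) (j : ℕ) :
    Tendsto (fun n => u n / u (n + (j + 1))) atTop (𝓝 0) := by
  induction j with
  | zero => exact hlim
  | succ j ih =>
    have hprod := ih.mul (hlim.comp (tendsto_add_atTop_nat (j + 1)))
    rw [zero_mul] at hprod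
    refine hprod.congr' ?_
    filter_upwards [(tendsto_add_atTop_nat (j + 1)).eventually hu] with n hn
    exact div_mul_div_cancel₀ hn

theorem coeff_zero_eq_zero_of_mul_eq_coe {K : Type*} [Field K] [TopologicalSpace K]
    [IsTopologicalRing K] [T2Space K] {f : K⟦X⟧} (hf : ∀ᶠ n in atTop, PowerSeries.coeff n f ≠ 0)
    (hlim : Tendsto (fun n => PowerSeries.coeff n f / PowerSeries.coeff (n + 1) f) atTop (𝓝 0))
    {p q : K[X]} (h : (q * f : K⟦X⟧) = p) : q.coeff 0 = 0 := by
  have hterm (j : ℕ) : Tendsto (fun n => q.coeff (j + 1) *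
      (PowerSeries.coeff (n - (j + 1)) f / PowerSeries.coeff n f)) atTop (𝓝 0) := by
    rw [← tendsto_add_atTop_iff_nat (j + 1)]
    simpa using (tendsto_div_add_succ hf hlim j).const_mul (q.coeff (j + 1))
  have hsum := tendsto_finsetSum (Finset.range q.natDegree) fun j _ => hterm j
  rw [Finset.sum_const_zero] at hsum
  refine neg_eq_zero.1 (tendsto_nhds_unique (tendsto_const_nhds.congr' ?_) hsum)
  filter_upwards [hf, eventually_gt_atTop p.natDegree, eventually_ge_atTop q.natDegree]
    with n hn hp hq
  have hcoeff :
      ∑ i ∈ Finset.range (q.natDegree + 1), q.coeff i * PowerSeries.coeff (n - i) f = 0 := by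
    calc
      _ = ∑ i ∈ Finset.range (n + 1), q.coeff i * PowerSeries.coeff (n - i) f := by
        refine Finset.sum_subset (Finset.range_mono (by lia)) fun i _ hi => ?_
        rw [coeff_eq_zero_of_natDegree_lt (by simpa using hi), zero_mul]
      _ = PowerSeries.coeff n (q * f : K⟦X⟧) := by
        simp_rw [PowerSeries.coeff_mul, coeff_coe]
        rw [Finset.Nat.sum_antidiagonal_eq_sum_range_succ_mk]
      _ = 0 := by rw [h, coeff_coe, coeff_eq_zero_of_natDegree_lt hp]
  rw [Finset.sum_range_succ', Nat.sub_zero] at hcoeff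
  rw [neg_eq_iff_add_eq_zero, add_comm]
  refine (mul_eq_zero.1 ?_).resolve_right hn
  rw [add_mul, Finset.sum_mul, ← hcoeff]
  simp only [mul_assoc, div_mul_cancel₀ _ hn]

theorem eq_zero_of_mul_eq_coe {K : Type*} [Field K] [TopologicalSpace K]
    [IsTopologicalRing K] [T2Space K] {f : K⟦X⟧} (hf : ∀ᶠ n in atTop, PowerSeries.coeff n f ≠ 0)
    (hlim : Tendsto (fun n => PowerSeries.coeff n f / PowerSeries.coeff (n + 1) f) atTop (𝓝 0))
    {p q : K[X]} (h : (q * f : K⟦X⟧) = p) : q = 0 := by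
  ext k
  rw [coeff_zero]
  induction k generalizing p q with
  | zero => exact coeff_zero_eq_zero_of_mul_eq_coe hf hlim h
  | succ k ih =>
    have hq := coeff_zero_eq_zero_of_mul_eq_coe hf hlim h
    have hp : p.coeff 0 = 0 := by
      rw [← constantCoeff_coe, ← h, map_mul, constantCoeff_coe, hq, zero_mul]
    rw [← divX_mul_X_add p, ← divX_mul_X_add q, hp, hq, C_0, add_zero, add_zero] at h
    rw [← coeff_divX]
    refine ih (p := p.divX) (mul_right_cancel₀ PowerSeries.X_ne_zero ?_)
    simpa [mul_right_comm] using h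

/-- The generating function `∑_{n ≥ 1} n! Xⁿ` of the non-empty permutations. -/
noncomputable def factorialSeries : ℚ⟦X⟧ :=
  PowerSeries.mk fun n => if n = 0 then 0 else (n.factorial : ℚ)

@[simp]
theorem coeff_factorialSeries (n : ℕ) :
    PowerSeries.coeff n factorialSeries = if n = 0 then 0 else (n.factorial : ℚ) :=
  PowerSeries.coeff_mk _ _

@[simp]
theorem constantCoeff_factorialSeries : PowerSeries.constantCoeff factorialSeries = 0 := by
  rw [← PowerSeries.coeff_zero_eq_constantCoeff_apply, coeff_factorialSeries, if_pos rfl]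

theorem X_sq_mul_derivative_factorialSeries :
    PowerSeries.X ^ 2 * PowerSeries.derivative ℚ factorialSeries =
      (1 - PowerSeries.X) * factorialSeries - PowerSeries.X := by
  ext n
  rcases n with _ | _ | n
  · simp
  · simp [sub_mul, PowerSeries.coeff_X_pow_mul', PowerSeries.coeff_succ_X_mul]
  · simp only [PowerSeries.coeff_X_pow_mul', le_add_iff_nonneg_left, zero_le, ↓reduceIte,
      Nat.reduceSubDiff, PowerSeries.coeff_derivative, coeff_factorialSeries, Nat.add_eq_zero_iff,
      one_ne_zero, and_false, Nat.factorial_succ, Nat.cast_mul, Nat.cast_add, Nat.cast_one, sub_mul,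
      one_mul, map_sub, and_self, PowerSeries.coeff_succ_X_mul, PowerSeries.coeff_X,
      Nat.add_eq_right, sub_zero]
    ring

theorem transcendental_factorialSeries : Transcendental ℚ[X] factorialSeries := by
  let := polynomialSqDifferential (K := ℚ)
  let := powerSeriesSqDifferential (K := ℚ)
  refine transcendental_of_sqDeriv_eq (α := 1 - X) (β := -X) (by simp) ?_ fun p q h => ?_
  · rw [powerSeries_sqDeriv, X_sq_mul_derivative_factorialSeries]
    simp [algebraMap_polynomial_powerSeries, sub_eq_add_neg]
  · refine eq_zero_of_mul_eq_coe ?_ ?_ h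
    · filter_upwards [eventually_ne_atTop 0] with n hn
      simp [hn, n.factorial_ne_zero]
    · refine (tendsto_one_div_add_atTop_nhds_zero_nat (𝕜 := ℚ)).congr' ?_
      filter_upwards [eventually_ne_atTop 0] with n hn
      have hfac : (n.factorial : ℚ) ≠ 0 := mod_cast n.factorial_ne_zero
      simp only [coeff_factorialSeries, hn, n.succ_ne_zero, if_false, Nat.factorial_succ]
      push_cast
      field_simp

end FactorialSeries

section PoleOrder

variable {A B S : Type*} [CommRing A] [CommRing B] [CommRing S]

/-- For a function `w` that is a quotient of elements of `A`, compared inside `S` through `ev`, and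
the zero locus of `L` parametrised by `φ`: `w` has a pole of order exactly `j` along `L = 0`. -/
def HasPoleOrder (ev : A →+* S) (φ : A →+* B) (L : A) (j : ℕ) (w : S) : Prop :=
  ∃ M N : A, φ M ≠ 0 ∧ φ N ≠ 0 ∧ ev M * ev L ^ j * w = ev N

/-- In the setting of `HasPoleOrder`: `w` has a pole of order less than `j` along `L = 0`. -/
def HasPoleOrderLT (ev : A →+* S) (φ : A →+* B) (L : A) (j : ℕ) (w : S) : Prop :=
  ∃ M N : A, φ M ≠ 0 ∧ φ N = 0 ∧ ev M * ev L ^ j * w = ev N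

variable {ev : A →+* S} {φ : A →+* B} {L : A} {j J : ℕ} {w w' : S}

theorem HasPoleOrder.lt (h : HasPoleOrder ev φ L j w) (hL : φ L = 0) (hj : j < J) :
    HasPoleOrderLT ev φ L J w := by
  obtain ⟨M, N, hM, -, h⟩ := h
  obtain ⟨d, rfl⟩ := Nat.exists_eq_add_of_lt hj
  refine ⟨M, N * L ^ (d + 1), hM, by simp [hL], ?_⟩
  rw [map_mul, map_pow, ← h, add_assoc, pow_add]
  ring

theorem HasPoleOrderLT.mono (h : HasPoleOrderLT ev φ L j w) (hj : j ≤ J) :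
    HasPoleOrderLT ev φ L J w := by
  obtain ⟨M, N, hM, hN, h⟩ := h
  obtain ⟨d, rfl⟩ := Nat.exists_eq_add_of_le hj
  refine ⟨M, N * L ^ d, hM, by simp [hN], ?_⟩
  rw [map_mul, map_pow, ← h, pow_add]
  ring

theorem hasPoleOrderLT_map [Nontrivial B] (hL : φ L = 0) (hJ : 0 < J) (a : A) :
    HasPoleOrderLT ev φ L J (ev a) :=
  ⟨1, L ^ J * a, by simp, by simp [hL, hJ.ne'], by simp⟩

theorem HasPoleOrderLT.ev_mul (h : HasPoleOrderLT ev φ L J w) (a : A) :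
    HasPoleOrderLT ev φ L J (ev a * w) := by
  obtain ⟨M, N, hM, hN, h⟩ := h
  refine ⟨M, a * N, hM, by simp [hN], ?_⟩
  rw [map_mul, ← h]
  ring

variable [IsDomain B]

theorem HasPoleOrderLT.add (h : HasPoleOrderLT ev φ L J w) (h' : HasPoleOrderLT ev φ L J w') :
    HasPoleOrderLT ev φ L J (w + w') := by
  obtain ⟨M, N, hM, hN, h⟩ := h
  obtain ⟨M', N', hM', hN', h'⟩ := h'
  refine ⟨M * M', M' * N + M * N', by simp [hM, hM'], by simp [hN, hN'], ?_⟩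
  rw [map_add, map_mul, map_mul, map_mul, ← h, ← h']
  ring

theorem HasPoleOrderLT.sum {ι : Type*} {s : Finset ι} {w : ι → S}
    (h : ∀ i ∈ s, HasPoleOrderLT ev φ L J (w i)) : HasPoleOrderLT ev φ L J (∑ i ∈ s, w i) :=
  Finset.sum_induction _ _ (fun _ _ => HasPoleOrderLT.add) ⟨1, 0, by simp, by simp, by simp⟩ h

theorem HasPoleOrder.ev_mul (h : HasPoleOrder ev φ L J w) {a : A} (ha : φ a ≠ 0) :
    HasPoleOrder ev φ L J (ev a * w) := by
  obtain ⟨M, N, hM, hN, h⟩ := h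
  refine ⟨M, a * N, hM, by simp [ha, hN], ?_⟩
  rw [map_mul, ← h]
  ring

theorem HasPoleOrder.not_lt (hev : Function.Injective ev) (h : HasPoleOrder ev φ L J w) :
    ¬ HasPoleOrderLT ev φ L J w := by
  rintro ⟨M', N', hM', hN', h'⟩
  obtain ⟨M, N, -, hN, h⟩ := h
  have hcross : M' * N = M * N' := hev <| by
    rw [map_mul, map_mul, ← h, ← h']
    ring
  exact mul_ne_zero hM' hN (by rw [← map_mul, hcross, map_mul, hN', mul_zero])

variable {d : Derivation ℤ A A} {d' : Derivation ℤ S S} {U : A}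

theorem hasPoleOrder_one_of_deriv (hd : ∀ a, d' (ev a) = ev (d a)) (hU : φ U ≠ 0)
    (hw' : ev L * w' = ev U * d' w) {M N : A} (hM : φ M ≠ 0)
    (hMN : φ (M * d N - N * d M) ≠ 0) (h : ev M * w = ev N) : HasPoleOrder ev φ L 1 w' := by
  refine ⟨M * M, U * (M * d N - N * d M), by simp [hM], by simpa [hU] using hMN, ?_⟩
  have hderiv := congr_arg d' h
  rw [Derivation.leibniz, smul_eq_mul, smul_eq_mul, hd, hd] at hderiv
  simp only [map_sub, map_mul, ← h]
  linear_combination ev M * ev M * hw' + ev U * ev M * hderiv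

/-- Differentiation raises the order of the pole by one, and dividing by `L` by one more. -/
theorem HasPoleOrder.of_deriv [CharZero B] (hd : ∀ a, d' (ev a) = ev (d a)) (hL : φ L = 0)
    (hdL : φ (d L) ≠ 0) (hU : φ U ≠ 0) (hw' : ev L * w' = ev U * d' w)
    (h : HasPoleOrder ev φ L (j + 1) w) : HasPoleOrder ev φ L (j + 3) w' := by
  obtain ⟨M, N, hM, hN, h⟩ := h
  refine ⟨M * M, U * (M * L * d N - L * N * d M - (j + 1 : ℕ) * M * N * d L), by simp [hM], ?_, ?_⟩
  · simpa [hL, hM, hN, hdL, hU] using Nat.cast_add_one_ne_zero j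
  · have hderiv := congr_arg d' h
    rw [Derivation.leibniz, Derivation.leibniz, Derivation.leibniz_pow, hd, hd, hd,
      Nat.add_sub_cancel] at hderiv
    simp only [smul_eq_mul, nsmul_eq_mul] at hderiv
    simp only [map_sub, map_mul, map_natCast, ← h]
    linear_combination ev M * ev M * ev L ^ (j + 2) * hw' + ev U * ev M * ev L * hderiv

/-- For `k ≥ 1` the pole of `w k` has order `2 * k - 1`, so the last term dominates the sum. -/
theorem sum_map_mul_ne_map [CharZero B] (hev : Function.Injective ev)
    (hd : ∀ a, d' (ev a) = ev (d a)) (hL : φ L = 0) (hdL : φ (d L) ≠ 0) (hU : φ U ≠ 0)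
    {w : ℕ → S} (hw : ∀ k, ev L * w (k + 1) = ev U * d' (w k)) {M N : A} (hM : φ M ≠ 0)
    (hMN : φ (M * d N - N * d M) ≠ 0) (h : ev M * w 0 = ev N) {K : ℕ} (hK : 0 < K)
    {c : ℕ → A} (hc : φ (c K) ≠ 0) (e : A) :
    ∑ k ∈ Finset.range (K + 1), ev (c k) * w k ≠ ev e := by
  obtain ⟨K, rfl⟩ := Nat.exists_eq_add_one_of_ne_zero hK.ne'
  have hpole (k : ℕ) : HasPoleOrder ev φ L (2 * k + 1) (w (k + 1)) := by
    induction k with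
    | zero => exact hasPoleOrder_one_of_deriv hd hU (hw 0) hM hMN h
    | succ k ih => exact ih.of_deriv hd hL hdL hU (hw (k + 1))
  have hlt (k : ℕ) (hk : k ∈ Finset.range (K + 1)) :
      HasPoleOrderLT ev φ L (2 * K + 1) (ev (c k) * w k) := by
    rcases k with _ | k
    · have h0 : HasPoleOrderLT ev φ L 1 (w 0) := ⟨M, L * N, hM, by simp [hL], by
        rw [map_mul, ← h]
        ring⟩
      exact (h0.mono (Nat.le_add_left 1 _)).ev_mul _
    · exact ((hpole k).lt hL (by have := Finset.mem_range.1 hk; lia)).ev_mul _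
  intro heq
  refine ((hpole K).ev_mul hc).not_lt hev ?_
  rw [Finset.sum_range_succ] at heq
  rw [eq_sub_of_add_eq' heq, sub_eq_add_neg, neg_eq_neg_one_mul, ← map_one ev, ← map_neg]
  exact (hasPoleOrderLT_map hL (Nat.succ_pos _) e).add ((HasPoleOrderLT.sum hlt).ev_mul _)

end PoleOrder

section DFinite

variable {K : Type*} [CommRing K]

/-- The Euler operator `X d/dX`. -/
noncomputable def eulerDeriv (f : K⟦X⟧) : K⟦X⟧ :=
  PowerSeries.X * PowerSeries.derivative K f

/-- A power series is D-finite if it satisfies a linear differential equation with polynomial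
coefficients. The equation may be inhomogeneous but has positive order, which is no restriction, as
differentiating turns the right-hand side into `0`. -/
def IsDFinite (f : K⟦X⟧) : Prop :=
  ∃ (m : ℕ) (c : ℕ → K[X]) (r : K[X]), 0 < m ∧ c m ≠ 0 ∧
    ∑ k ∈ Finset.range (m + 1), (c k : K⟦X⟧) * eulerDeriv^[k] f = r

theorem coeff_eulerDeriv_iterate (f : K⟦X⟧) (k n : ℕ) :
    PowerSeries.coeff n (eulerDeriv^[k] f) = (n : K) ^ k * PowerSeries.coeff n f := by
  induction k with
  | zero => simp
  | succ k ih =>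
    rw [Function.iterate_succ_apply', eulerDeriv]
    rcases n with _ | n
    · simp
    · rw [PowerSeries.coeff_succ_X_mul, PowerSeries.coeff_derivative, ih]
      push_cast
      ring

theorem coeff_sum_mul_eulerDeriv_iterate (f : K⟦X⟧) {d m n : ℕ} {t : ℕ → K[X]}
    (hm : ∀ i ∈ Finset.range (d + 1), (t i).natDegree ≤ m) :
    PowerSeries.coeff (n + d) (∑ k ∈ Finset.range (m + 1),
        ((∑ i ∈ Finset.range (d + 1), monomial (d - i) ((t i).coeff k) : K[X]) : K⟦X⟧) *
          eulerDeriv^[k] f) =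
      ∑ i ∈ Finset.range (d + 1), (t i).eval ((n + i : ℕ) : K) * PowerSeries.coeff (n + i) f := by
  have hterm (k i : ℕ) (hi : i ∈ Finset.range (d + 1)) :
      PowerSeries.coeff (n + d)
          (((monomial (d - i) ((t i).coeff k) : K[X]) : K⟦X⟧) * eulerDeriv^[k] f) =
        (t i).coeff k * ((n + i : ℕ) : K) ^ k * PowerSeries.coeff (n + i) f := by
    have hid : n + d = n + i + (d - i) := by have := Finset.mem_range.1 hi; lia
    rw [← C_mul_X_pow_eq_monomial, coe_mul, coe_C, coe_pow, coe_X, mul_assoc,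
      PowerSeries.coeff_C_mul, hid, PowerSeries.coeff_X_pow_mul,
      coeff_eulerDeriv_iterate, mul_assoc]
  calc
    _ = ∑ k ∈ Finset.range (m + 1), ∑ i ∈ Finset.range (d + 1),
          (t i).coeff k * ((n + i : ℕ) : K) ^ k * PowerSeries.coeff (n + i) f := by
      rw [map_sum]
      refine Finset.sum_congr rfl fun k _ => ?_
      rw [← coeToPowerSeries.ringHom_apply, map_sum, Finset.sum_mul, map_sum]
      exact Finset.sum_congr rfl (hterm k)
    _ = _ := by
      rw [Finset.sum_comm]
      refine Finset.sum_congr rfl fun i hi => ?_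
      rw [← Finset.sum_mul, eval_eq_sum_range' (Nat.lt_succ_of_le (hm i hi))]

end DFinite

theorem IsPRecursive.isDFinite {a : ℕ → ℚ} (h : IsPRecursive a) : IsDFinite (PowerSeries.mk a) := by
  obtain ⟨d, p, hp, hrec⟩ := h
  -- The factor `n`, and hence `X` below, extends the recurrence to `n = 0` and makes some
  -- coefficient non-constant.
  set t : ℕ → ℚ[X] := fun i => (X * p i).comp (X - C (i : ℚ)) with ht
  have hdeg (i : ℕ) (hi : p i ≠ 0) : (t i).natDegree = (p i).natDegree + 1 := by
    rw [ht, natDegree_comp, natDegree_X_sub_C, mul_one, natDegree_X_mul hi]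
  obtain ⟨i, hi, hmax⟩ := (Finset.range (d + 1)).exists_max_image (fun i => (t i).natDegree)
    ⟨d, Finset.self_mem_range_succ d⟩
  have hpos : 0 < (t i).natDegree :=
    (Nat.succ_pos _).trans_le ((hdeg d hp).symm.le.trans (hmax d (Finset.self_mem_range_succ d)))
  set c : ℕ → ℚ[X] := fun k => ∑ i ∈ Finset.range (d + 1), monomial (d - i) ((t i).coeff k) with hc
  set f := ∑ k ∈ Finset.range ((t i).natDegree + 1), (c k : ℚ⟦X⟧) * eulerDeriv^[k] (.mk a) with hf
  refine ⟨(t i).natDegree, c, f.trunc d, hpos, fun h0 => ?_, ?_⟩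
  · have hlead : (c (t i).natDegree).coeff (d - i) = (t i).leadingCoeff := by
      rw [hc, finsetSum_coeff, Finset.sum_eq_single_of_mem i hi, coeff_monomial_same, leadingCoeff]
      intro j hj hji
      rw [Finset.mem_range] at hi hj
      exact coeff_monomial_of_ne _ (by lia)
    rw [h0, coeff_zero] at hlead
    exact hpos.ne' (by rw [leadingCoeff_eq_zero.1 hlead.symm, natDegree_zero])
  · ext n
    rw [coeff_coe, PowerSeries.coeff_trunc]
    split_ifs with hn
    · rfl
    · obtain ⟨n, rfl⟩ := Nat.exists_eq_add_of_le' (not_lt.1 hn)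
      rw [← hf, hf, coeff_sum_mul_eulerDeriv_iterate _ hmax]
      have heval : ∑ i ∈ Finset.range (d + 1), (t i).eval ((n + i : ℕ) : ℚ) * a (n + i) =
          n * ∑ i ∈ Finset.range (d + 1), (p i).eval (n : ℚ) * a (n + i) := by
        rw [Finset.mul_sum]
        exact Finset.sum_congr rfl fun i _ => by simp [ht, mul_assoc]
      simp only [PowerSeries.coeff_mk, heval]
      rcases n.eq_zero_or_pos with rfl | hn
      · rw [Nat.cast_zero, zero_mul]
      · rw [hrec n hn, mul_zero]
section FactorialSeriesSubst

open scoped Differential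

attribute [local instance] polynomialSqDifferential powerSeriesSqDifferential
  sqDifferentialAlgebra

/-- The polynomial `L(X, Y) = (1 - X) Y - X` over `ℚ[X]` with `X² F' = L(X, F)`, where `F` is
`factorialSeries`. -/
noncomputable def factorialSeriesODE : ℚ[X][X] := C (1 - X) * X - C X

/-- The parametrisation `X ↦ y / (1 + y)`, `Y ↦ y` of the curve `factorialSeriesODE = 0`. -/
noncomputable def evalODECurve : ℚ[X][X] →+* ℚ⟦X⟧ :=
  eval₂RingHom (aeval (PowerSeries.X * (1 + PowerSeries.X)⁻¹ : ℚ⟦X⟧)).toRingHom PowerSeries.X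

theorem sqDeriv_factorialSeries : factorialSeries′ = aeval factorialSeries factorialSeriesODE := by
  rw [powerSeries_sqDeriv, X_sq_mul_derivative_factorialSeries]
  simp [factorialSeriesODE, algebraMap_polynomial_powerSeries]

@[simp]
theorem evalODECurve_X : evalODECurve X = PowerSeries.X := by
  simp [evalODECurve]

theorem evalODECurve_C_X : evalODECurve (C X) = PowerSeries.X * (1 + PowerSeries.X)⁻¹ := by
  simp [evalODECurve]

theorem evalODECurve_map_C (p : ℚ[X]) : evalODECurve (p.map C) = p := by
  have h : (aeval (PowerSeries.X * (1 + PowerSeries.X)⁻¹ : ℚ⟦X⟧)).toRingHom.comp (C : ℚ →+* ℚ[X]) =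
      PowerSeries.C := RingHom.ext fun a => by simp [PowerSeries.algebraMap_eq]
  rw [evalODECurve, coe_eval₂RingHom, eval₂_map, h, eval₂_C_X_eq_coe]

theorem evalODECurve_C_X_mul : evalODECurve (C X) * (1 + PowerSeries.X) = PowerSeries.X := by
  rw [evalODECurve_C_X, mul_assoc, PowerSeries.inv_mul_cancel _ (by simp), mul_one]

theorem evalODECurve_C_X_ne_zero : evalODECurve (C X) ≠ 0 := fun h =>
  PowerSeries.X_ne_zero (by rw [← evalODECurve_C_X_mul, h, zero_mul])

theorem evalODECurve_ode : evalODECurve factorialSeriesODE = 0 := by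
  simp only [factorialSeriesODE, map_sub, map_mul, map_one, evalODECurve_X]
  linear_combination -evalODECurve_C_X_mul

theorem implicitDeriv_C_X (v : ℚ[X][X]) : Differential.implicitDeriv v (C X) = C X ^ 2 := by
  simp [polynomial_sqDeriv]

theorem evalODECurve_implicitDeriv_ode :
    evalODECurve (Differential.implicitDeriv factorialSeriesODE factorialSeriesODE) =
      -(evalODECurve (C X) * PowerSeries.X) := by
  conv_lhs => enter [2, 2]; rw [factorialSeriesODE]
  rw [C_sub, C_1, map_sub, Derivation.leibniz, map_sub _ 1, Derivation.map_one_eq_zero,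
    implicitDeriv_C_X, Differential.implicitDeriv_X]
  simp only [smul_eq_mul, map_sub, map_add, map_mul, map_pow, map_zero, evalODECurve_X,
    evalODECurve_ode]
  linear_combination -evalODECurve (C X) * evalODECurve_C_X_mul

theorem hasSubst_factorialSeries : PowerSeries.HasSubst factorialSeries :=
  .of_constantCoeff_zero' constantCoeff_factorialSeries

theorem subst_coe_polynomial (p : ℚ[X]) :
    (p : ℚ⟦X⟧).subst factorialSeries = aeval factorialSeries (p.map C) := by
  rw [PowerSeries.subst_coe hasSubst_factorialSeries]
  exact (aeval_map_algebraMap ℚ[X] factorialSeries p).symm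

theorem aeval_ode_mul_subst_eulerDeriv (g : ℚ⟦X⟧) :
    aeval factorialSeries factorialSeriesODE * (eulerDeriv g).subst factorialSeries =
      factorialSeries * (g.subst factorialSeries)′ := by
  rw [← sqDeriv_factorialSeries, powerSeries_sqDeriv, powerSeries_sqDeriv, eulerDeriv,
    PowerSeries.derivative_subst hasSubst_factorialSeries,
    PowerSeries.subst_mul hasSubst_factorialSeries, PowerSeries.subst_X hasSubst_factorialSeries]
  ring

theorem not_isDFinite_of_aeval_mul_subst_eq {g : ℚ⟦X⟧} {M N : ℚ[X][X]}
    (hM : evalODECurve M ≠ 0)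
    (hMN : evalODECurve (M * Differential.implicitDeriv factorialSeriesODE N -
      N * Differential.implicitDeriv factorialSeriesODE M) ≠ 0)
    (h : aeval factorialSeries M * g.subst factorialSeries = aeval factorialSeries N) :
    ¬ IsDFinite g := by
  rintro ⟨m, c, r, hm, hc, hrel⟩
  have := algebraRat.charZero ℚ⟦X⟧
  have hL :
      evalODECurve (Differential.implicitDeriv factorialSeriesODE factorialSeriesODE) ≠ 0 := by
    rw [evalODECurve_implicitDeriv_ode]
    exact neg_ne_zero.2 (mul_ne_zero evalODECurve_C_X_ne_zero PowerSeries.X_ne_zero)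
  refine sum_map_mul_ne_map (ev := (aeval factorialSeries : ℚ[X][X] →ₐ[ℚ[X]] ℚ⟦X⟧).toRingHom)
    (w := fun k => (eulerDeriv^[k] g).subst factorialSeries) (c := fun k => (c k).map C)
    (transcendental_iff_injective.1 transcendental_factorialSeries)
    (Differential.deriv_aeval_eq_implicitDeriv factorialSeries _ sqDeriv_factorialSeries)
    evalODECurve_ode hL (U := X) ?_ (fun k => ?_) hM hMN h hm ?_ (r.map C) ?_
  · rw [evalODECurve_X]
    exact PowerSeries.X_ne_zero
  · rw [Function.iterate_succ_apply']
    simpa using aeval_ode_mul_subst_eulerDeriv _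
  · rwa [evalODECurve_map_C, Ne, coe_eq_zero_iff]
  · simp only [AlgHom.toRingHom_eq_coe, RingHom.coe_coe, ← subst_coe_polynomial, ← hrel,
      ← PowerSeries.coe_substAlgHom hasSubst_factorialSeries, map_sum, map_mul]

theorem evalODECurve_implicitDeriv_map_C (p : ℚ[X]) :
    evalODECurve (Differential.implicitDeriv factorialSeriesODE (p.map C)) = 0 := by
  induction p using Polynomial.induction_on' with
  | add p q hp hq => rw [Polynomial.map_add, map_add, map_add, hp, hq, add_zero]
  | monomial n a =>
    rw [map_monomial, ← C_mul_X_pow_eq_monomial, Derivation.leibniz, Derivation.leibniz_pow,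
      Differential.implicitDeriv_C, Differential.implicitDeriv_X, polynomial_sqDeriv]
    simp [evalODECurve_ode]

theorem not_isDFinite_of_aeval_mul_subst_add_X_eq {g : ℚ⟦X⟧} {q r : ℚ[X]} (hq : q ≠ 0)
    (h : aeval factorialSeries q * (g.subst factorialSeries + PowerSeries.X) =
      aeval factorialSeries r) : ¬ IsDFinite g := by
  have hM : evalODECurve (q.map C) ≠ 0 := by rwa [evalODECurve_map_C, Ne, coe_eq_zero_iff]
  refine not_isDFinite_of_aeval_mul_subst_eq (M := q.map C) (N := r.map C - q.map C * C X) hM ?_ ?_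
  · have hMN : evalODECurve (q.map C * Differential.implicitDeriv factorialSeriesODE
          (r.map C - q.map C * C X) - (r.map C - q.map C * C X) *
          Differential.implicitDeriv factorialSeriesODE (q.map C)) =
        -(evalODECurve (q.map C) * evalODECurve (C X)) ^ 2 := by
      rw [map_sub (Differential.implicitDeriv _), Derivation.leibniz, implicitDeriv_C_X]
      simp only [smul_eq_mul, map_sub, map_add, map_mul, map_pow, evalODECurve_implicitDeriv_map_C]
      ring
    rw [hMN]
    exact neg_ne_zero.2 (pow_ne_zero 2 (mul_ne_zero hM evalODECurve_C_X_ne_zero))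
  · have hmap : ∀ p : ℚ[X], aeval factorialSeries (p.map C) = aeval factorialSeries p :=
      aeval_map_algebraMap ℚ[X] factorialSeries
    rw [map_sub, map_mul, hmap, hmap, aeval_C, algebraMap_polynomial_powerSeries, coe_X]
    linear_combination h

end FactorialSeriesSubst

section Blocks

variable {α β β' γ : Type*} [LinearOrder α] [LinearOrder β] [LinearOrder β'] [LinearOrder γ]

/-- Blocks of a permutation of an arbitrary linear order, as order-connected sets with
order-connected image. Unlike `IsPermBlock`, this allows the empty set. -/
def IsBlock (π : Equiv.Perm α) (B : Set α) : Prop :=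
  B.OrdConnected ∧ (π '' B).OrdConnected

/-- Simplicity of a permutation of an arbitrary linear order. -/
def HasTrivialBlocks (π : Equiv.Perm α) : Prop :=
  ∀ B, IsBlock π B → B.Subsingleton ∨ B = Set.univ

theorem isBlock_singleton (π : Equiv.Perm α) (a : α) : IsBlock π {a} :=
  ⟨Set.ordConnected_singleton, by simpa using Set.ordConnected_singleton⟩

theorem finset_eq_Icc_iff {s : Finset α} [LocallyFiniteOrder α] (hs : s.Nonempty) :
    (∃ a b, s = Finset.Icc a b) ↔ (s : Set α).OrdConnected := by
  constructor
  · rintro ⟨a, b, rfl⟩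
    simpa using Set.ordConnected_Icc
  · intro h
    refine ⟨s.min' hs, s.max' hs, Finset.ext fun x => ?_⟩
    rw [Finset.mem_Icc]
    exact ⟨fun hx => ⟨s.min'_le x hx, s.le_max' x hx⟩,
      fun hx => h.out (s.min'_mem hs) (s.max'_mem hs) hx⟩

theorem isPermBlock_iff {n : ℕ} {π : Equiv.Perm (Fin n)} {B : Finset (Fin n)} :
    IsPermBlock π B ↔ B.Nonempty ∧ IsBlock π B := by
  refine and_congr_right fun hB => ?_
  rw [finset_eq_Icc_iff hB, finset_eq_Icc_iff (hB.image π), Finset.coe_image, IsBlock]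

theorem isSimplePerm_iff {n : ℕ} {π : Equiv.Perm (Fin n)} :
    IsSimplePerm π ↔ HasTrivialBlocks π := by
  constructor
  · intro h B hB
    lift B to Finset (Fin n) using B.toFinite
    obtain rfl | hne := B.eq_empty_or_nonempty
    · exact .inl (by simp)
    · refine (h B (isPermBlock_iff.2 ⟨hne, hB⟩)).imp (fun h1 => ?_) (by simp)
      exact Finset.card_le_one_iff_subsingleton.1 h1.le
  · intro h B hB
    obtain ⟨hne, hB⟩ := isPermBlock_iff.1 hB
    refine (h B hB).imp (fun h1 => ?_) (by simp)
    exact le_antisymm (Finset.card_le_one_iff_subsingleton.2 h1) hne.card_pos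

/-- `π` is obtained from `σ` by inflating each point `i` to the block `c ⁻¹' {i}`. The last field
says that `c`, read on values instead of positions, is monotone as well. -/
structure IsInflation (π : Equiv.Perm α) (σ : Equiv.Perm β) (c : α → β) : Prop where
  monotone : Monotone c
  surjective : Function.Surjective c
  monotone_symm : Monotone (σ ∘ c ∘ π.symm)

theorem ordConnected_image_of_monotone {f : α → β} (hf : Monotone f) (hs : Function.Surjective f)
    {C : Set α} (hC : C.OrdConnected) : (f '' C).OrdConnected := by
  constructor
  rintro _ ⟨a, ha, rfl⟩ _ ⟨b, hb, rfl⟩ y ⟨hay, hyb⟩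
  obtain ⟨z, rfl⟩ := hs y
  rcases le_total z a with hza | haz
  · exact ⟨a, ha, le_antisymm hay (hf hza)⟩
  rcases le_total b z with hbz | hzb
  · exact ⟨b, hb, le_antisymm (hf hbz) hyb⟩
  exact ⟨z, hC.out ha hb ⟨haz, hzb⟩, rfl⟩

theorem ordConnected_compl_singleton_of_image_eq_univ {f : α → β} (hf : Monotone f) {C : Set α}
    (hC : C.OrdConnected) (hfC : f '' C = Set.univ) {a : α} (ha : a ∉ C) :
    ({f a}ᶜ : Set β).OrdConnected := by
  constructor
  intro y hy z hz w hw hwa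
  obtain rfl : w = f a := hwa
  obtain ⟨u, hu, rfl⟩ := hfC.ge (Set.mem_univ y)
  obtain ⟨v, hv, rfl⟩ := hfC.ge (Set.mem_univ z)
  have hua : u < a := hf.reflect_lt (hw.1.lt_of_ne hy)
  have hav : a < v := hf.reflect_lt (hw.2.lt_of_ne' hz)
  exact ha (hC.out hu hv ⟨hua.le, hav.le⟩)

theorem eq_of_monotone_of_surjective [Finite β] {f g : α → β} (hf : Monotone f)
    (hfs : Function.Surjective f) (hg : Monotone g) (hfg : ∀ x y, f x = f y ↔ g x = g y) :
    f = g := by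
  have hinv : ∀ x, g (Function.surjInv hfs (f x)) = g x := fun x =>
    (hfg _ _).1 (Function.surjInv_eq hfs _)
  have hmono : StrictMono (g ∘ Function.surjInv hfs) := by
    intro i j hij
    obtain ⟨x, rfl⟩ := hfs i
    obtain ⟨y, rfl⟩ := hfs j
    simp only [Function.comp_apply, hinv]
    exact (hg (hf.reflect_lt hij).le).lt_of_ne fun h => hij.ne ((hfg x y).2 h)
  funext x
  rw [← hinv x]
  exact (congrFun hmono.eq_id (f x)).symm

namespace IsInflation

variable {π : Equiv.Perm α} {σ : Equiv.Perm β} {σ' : Equiv.Perm β'} {c : α → β} {c' : α → β'}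

theorem refl (π : Equiv.Perm α) : IsInflation π π id where
  monotone := monotone_id
  surjective := Function.surjective_id
  monotone_symm := by simpa using monotone_id

theorem trans {τ : Equiv.Perm γ} {g : β → γ} (h : IsInflation π σ c) (h' : IsInflation σ τ g) :
    IsInflation π τ (g ∘ c) where
  monotone := h'.monotone.comp h.monotone
  surjective := h'.surjective.comp h.surjective
  monotone_symm := by
    convert h'.monotone_symm.comp h.monotone_symm using 1
    funext x
    simp

theorem surjective_symm (h : IsInflation π σ c) : Function.Surjective (σ ∘ c ∘ π.symm) :=
  σ.surjective.comp (h.surjective.comp π.symm.surjective)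

theorem isBlock_image (h : IsInflation π σ c) {C : Set α} (hC : IsBlock π C) :
    IsBlock σ (c '' C) := by
  refine ⟨ordConnected_image_of_monotone h.monotone h.surjective hC.1, ?_⟩
  convert ordConnected_image_of_monotone h.monotone_symm h.surjective_symm hC.2 using 1
  simp only [Set.image_image, Function.comp_apply, Equiv.symm_apply_apply]

theorem isBlock_preimage (h : IsInflation π σ c) {B : Set β} (hB : IsBlock σ B) :
    IsBlock π (c ⁻¹' B) := by
  refine ⟨hB.1.preimage_mono h.monotone, ?_⟩
  convert hB.2.preimage_mono h.monotone_symm using 1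
  ext x
  simp

/-- If a proper block covered all of `σ`, a point outside it would sit in a corner of `σ`, and
removing that corner would leave a proper block of `σ`. -/
theorem subsingleton_image_of_isBlock [Fintype β] (h : IsInflation π σ c)
    (hσ : HasTrivialBlocks σ) (hβ : 2 < Fintype.card β) {C : Set α} (hC : IsBlock π C)
    (hCne : C ≠ Set.univ) : (c '' C).Subsingleton := by
  refine (hσ _ (h.isBlock_image hC)).resolve_right fun hcC => ?_
  obtain ⟨x, hx⟩ := (Set.ne_univ_iff_exists_notMem _).1 hCne
  have hvalues : (σ ∘ c ∘ π.symm) '' (π '' C) = Set.univ := by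
    rw [← Set.image_comp, Function.comp_assoc, Function.comp_assoc, π.symm_comp_self,
      Function.comp_id, Set.image_comp, hcC, Set.image_univ, σ.range_eq_univ]
  have hcorner : IsBlock σ {c x}ᶜ := by
    refine ⟨ordConnected_compl_singleton_of_image_eq_univ h.monotone hC.1 hcC hx, ?_⟩
    have := ordConnected_compl_singleton_of_image_eq_univ h.monotone_symm hC.2 hvalues
      (a := π x) (by simpa using hx)
    simpa [Set.image_compl_eq σ.bijective] using this
  obtain ⟨a, ha, b, hb, hab⟩ : ∃ a ∈ ({c x}ᶜ : Finset β), ∃ b ∈ ({c x}ᶜ : Finset β), a ≠ b := by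
    rw [← Finset.one_lt_card, Finset.card_compl, Finset.card_singleton]
    omega
  rcases hσ _ hcorner with hsub | huniv
  · exact hab (hsub (by simpa using ha) (by simpa using hb))
  · exact huniv.ge (Set.mem_univ (c x)) rfl

theorem eq_of_eq [Nontrivial β] [Fintype β'] (h : IsInflation π σ c) (h' : IsInflation π σ' c')
    (hσ' : HasTrivialBlocks σ') (hβ' : 2 < Fintype.card β') {x y : α} (hxy : c x = c y) :
    c' x = c' y := by
  have hfiber : c ⁻¹' {c x} ≠ Set.univ := by
    obtain ⟨b, hb⟩ := exists_ne (c x)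
    obtain ⟨z, rfl⟩ := h.surjective b
    exact (Set.ne_univ_iff_exists_notMem _).2 ⟨z, hb⟩
  exact h'.subsingleton_image_of_isBlock hσ' hβ' (h.isBlock_preimage (isBlock_singleton σ _)) hfiber
    ⟨x, rfl, rfl⟩ ⟨y, hxy.symm, rfl⟩

theorem card_le_card [Nontrivial β] [Fintype β] [Fintype β'] (h : IsInflation π σ c)
    (h' : IsInflation π σ' c') (hσ' : HasTrivialBlocks σ') (hβ' : 2 < Fintype.card β') :
    Fintype.card β' ≤ Fintype.card β := by
  refine Fintype.card_le_of_surjective (c' ∘ Function.surjInv h.surjective) fun b => ?_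
  obtain ⟨x, rfl⟩ := h'.surjective b
  exact ⟨c x, h.eq_of_eq h' hσ' hβ' (Function.surjInv_eq h.surjective _)⟩

theorem perm_eq [Finite β] {σ' : Equiv.Perm β} (h : IsInflation π σ c)
    (h' : IsInflation π σ' c) : σ = σ' := by
  have hcomp : σ ∘ c ∘ π.symm = σ' ∘ c ∘ π.symm :=
    eq_of_monotone_of_surjective h.monotone_symm h.surjective_symm h'.monotone_symm fun x y => by
      simp only [Function.comp_apply, EmbeddingLike.apply_eq_iff_eq]
  ext1 i
  obtain ⟨x, rfl⟩ := h.surjective i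
  simpa using congrFun hcomp (π x)

theorem unique {m m' : ℕ} {σ : Equiv.Perm (Fin m)} {σ' : Equiv.Perm (Fin m')} {c : α → Fin m}
    {c' : α → Fin m'} (h : IsInflation π σ c) (h' : IsInflation π σ' c')
    (hσ : HasTrivialBlocks σ) (hσ' : HasTrivialBlocks σ') (hm : 2 < m) (hm' : 2 < m') :
    (⟨m, σ, c⟩ : Σ m : ℕ, Equiv.Perm (Fin m) × (α → Fin m)) = ⟨m', σ', c'⟩ := by
  have := Fin.nontrivial_iff_two_le.2 hm.le
  have := Fin.nontrivial_iff_two_le.2 hm'.le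
  have hle : m ≤ m' := by simpa using h'.card_le_card h hσ (by simpa)
  have hge : m' ≤ m := by simpa using h.card_le_card h' hσ' (by simpa)
  obtain rfl : m = m' := le_antisymm hle hge
  obtain rfl : c = c' := eq_of_monotone_of_surjective h.monotone h.surjective h'.monotone
    fun x y => ⟨h.eq_of_eq h' hσ' (by simpa), h'.eq_of_eq h hσ (by simpa)⟩
  rw [h.perm_eq h']

end IsInflation

theorem exists_perm_monotone_comp {m : ℕ} {f : α → Fin m} (hf : Function.Surjective f)
    (hfib : ∀ i, (f ⁻¹' {i}).OrdConnected) : ∃ σ : Equiv.Perm (Fin m), Monotone (σ ∘ f) := by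
  let s := Function.surjInv hf
  have hs : ∀ i, f (s i) = i := Function.surjInv_eq hf
  have hmono : StrictMono (s ∘ Tuple.sort s) := (Tuple.monotone_sort s).strictMono_of_injective
    ((Function.injective_surjInv hf).comp (Tuple.sort s).injective)
  refine ⟨(Tuple.sort s).symm, fun x y hxy => hmono.le_iff_le.1 ?_⟩
  simp only [Function.comp_apply, Equiv.apply_symm_apply]
  by_contra! hlt
  have hne : f x ≠ f y := fun h => (h ▸ hlt).false
  rcases le_total (s (f y)) x with h | h
  · exact hne ((hfib (f y)).out (hs _) rfl ⟨h, hxy⟩)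
  · exact hne.symm ((hs _).symm.trans ((hfib (f x)).out rfl (hs _) ⟨h, hlt.le⟩))

theorem exists_isInflation_of_isBlock_fibers [Fintype α] {π : Equiv.Perm α} {g : α → γ}
    (hg : Monotone g) (hfib : ∀ z, IsBlock π (g ⁻¹' {z})) :
    ∃ (σ : Equiv.Perm (Fin (Finset.univ.image g).card)) (c : α → _), IsInflation π σ c := by
  let e := (Finset.univ.image g).orderIsoOfFin rfl
  let c : α → Fin (Finset.univ.image g).card := fun x => e.symm ⟨g x, by simp⟩
  have hc : Function.Surjective c := by
    intro i
    obtain ⟨x, -, hx⟩ := Finset.mem_image.1 (e i).2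
    exact ⟨x, e.symm_apply_eq.2 (Subtype.ext hx)⟩
  have hfibers : ∀ i, (c ∘ π.symm) ⁻¹' {i} = π '' (g ⁻¹' {(e i : γ)}) := by
    intro i
    ext y
    simp [c, e.symm_apply_eq, Subtype.ext_iff]
  obtain ⟨σ, hσ⟩ := exists_perm_monotone_comp (hc.comp π.symm.surjective) fun i => by
    rw [hfibers]
    exact (hfib _).2
  exact ⟨σ, c, fun x y hxy => e.symm.monotone (hg hxy), hc, hσ⟩

theorem exists_isInflation_of_not_hasTrivialBlocks [Fintype α] {π : Equiv.Perm α}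
    (hπ : ¬ HasTrivialBlocks π) : ∃ m, 2 ≤ m ∧ m < Fintype.card α ∧
      ∃ (σ : Equiv.Perm (Fin m)) (c : α → Fin m), IsInflation π σ c := by
  classical
  simp only [HasTrivialBlocks, not_forall, not_or, exists_prop, Set.not_subsingleton_iff] at hπ
  obtain ⟨B, hB, ⟨b, hb, b', hb', hbb'⟩, hBne⟩ := hπ
  obtain ⟨a, ha⟩ := (Set.ne_univ_iff_exists_notMem _).1 hBne
  let g : α → α := fun x => if x ∈ B then b else x
  have hg : Monotone g := by
    intro x y hxy
    have hby : x ∈ B → y ∉ B → b ≤ y := fun hx hy =>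
      le_of_not_ge fun hyb => hy (hB.1.out hx hb ⟨hxy, hyb⟩)
    have hxb : x ∉ B → y ∈ B → x ≤ b := fun hx hy =>
      le_of_not_ge fun hbx => hx (hB.1.out hb hy ⟨hbx, hxy⟩)
    grind
  have hfib : ∀ z, IsBlock π (g ⁻¹' {z}) := by
    intro z
    obtain h | h | h : g ⁻¹' {z} = B ∨ g ⁻¹' {z} = ∅ ∨ g ⁻¹' {z} = {z} := by
      by_cases hzb : z = b
      · exact .inl (by grind)
      · by_cases hzB : z ∈ B
        · exact .inr (.inl (by grind))
        · exact .inr (.inr (by grind))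
    · rwa [h]
    · simp [h, IsBlock, Set.ordConnected_empty]
    · rw [h]
      exact isBlock_singleton π z
  refine ⟨_, ?_, ?_, exists_isInflation_of_isBlock_fibers hg hfib⟩
  · exact Finset.one_lt_card.2 ⟨g a, by simp, g b, by simp, by grind⟩
  · refine Finset.card_image_le.lt_of_ne fun hcard => hbb' ?_
    exact Finset.card_image_iff.1 hcard (by simp) (by simp) (by grind)

theorem exists_isInflation_hasTrivialBlocks {n : ℕ} (hn : 2 ≤ n) (π : Equiv.Perm (Fin n)) :
    ∃ m, 2 ≤ m ∧ ∃ (σ : Equiv.Perm (Fin m)) (c : Fin n → Fin m),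
      HasTrivialBlocks σ ∧ IsInflation π σ c := by
  induction n using Nat.strong_induction_on with
  | _ n ih =>
    by_cases hπ : HasTrivialBlocks π
    · exact ⟨n, hn, π, id, hπ, .refl π⟩
    obtain ⟨k, hk, hkn, τ, g, hτ⟩ := exists_isInflation_of_not_hasTrivialBlocks hπ
    obtain ⟨m, hm, σ, c, hσ, h⟩ := ih k (by simpa using hkn) hk τ
    exact ⟨m, hm, σ, c ∘ g, hσ, hτ.trans h⟩

end Blocks

section SumDecomposable

variable {α : Type*} [LinearOrder α] {n m : ℕ}

/-- `π = π₁ ⊕ π₂` with both summands nonempty: `π` is an inflation of `12`. -/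
def IsSumDecomposable (π : Equiv.Perm α) : Prop :=
  ∃ c : α → Fin 2, IsInflation π 1 c

/-- `π = π₁ ⊖ π₂` with both summands nonempty: `π` is an inflation of `21`. -/
def IsSkewDecomposable (π : Equiv.Perm α) : Prop :=
  ∃ c : α → Fin 2, IsInflation π Fin.revPerm c

theorem IsInflation.isSumDecomposable_or_isSkewDecomposable {π : Equiv.Perm α}
    {σ : Equiv.Perm (Fin 2)} {c : α → Fin 2} (h : IsInflation π σ c) :
    IsSumDecomposable π ∨ IsSkewDecomposable π := by
  have hσ : ∀ τ : Equiv.Perm (Fin 2), τ = 1 ∨ τ = Fin.revPerm := by decide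
  obtain rfl | rfl := hσ σ
  · exact .inl ⟨c, h⟩
  · exact .inr ⟨c, h⟩

/-- The smaller of two first-block points lies in the first block for both decompositions, and
likewise the larger of two second-block points in the second; `π` would have to keep and to reverse
the order of these two. -/
theorem IsSumDecomposable.not_isSkewDecomposable {π : Equiv.Perm α} (h : IsSumDecomposable π) :
    ¬ IsSkewDecomposable π := by
  rintro ⟨c', h'⟩
  obtain ⟨c, h⟩ := h
  obtain ⟨a, ha⟩ := h.surjective 0
  obtain ⟨b, hb⟩ := h.surjective 1
  obtain ⟨a', ha'⟩ := h'.surjective 0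
  obtain ⟨b', hb'⟩ := h'.surjective 1
  have hc0 : c (min a a') = 0 := Fin.le_zero_iff.1 ((h.monotone (min_le_left _ _)).trans ha.le)
  have hc0' : c' (min a a') = 0 := Fin.le_zero_iff.1 ((h'.monotone (min_le_right _ _)).trans ha'.le)
  have hc1 : c (max b b') = 1 := Fin.last_le_iff.1 (hb.ge.trans (h.monotone (le_max_left _ _)))
  have hc1' : c' (max b b') = 1 := Fin.last_le_iff.1 (hb'.ge.trans (h'.monotone (le_max_right _ _)))
  have hlt : π (min a a') < π (max b b') := h.monotone_symm.reflect_lt (by simp [hc0, hc1])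
  have hgt : π (max b b') < π (min a a') := h'.monotone_symm.reflect_lt (by simp [hc0', hc1'])
  exact hlt.asymm hgt

theorem IsInflation.trans_revPerm {π : Equiv.Perm (Fin n)} {σ : Equiv.Perm (Fin m)}
    {c : Fin n → Fin m} (h : IsInflation π σ c) :
    IsInflation (π.trans Fin.revPerm) (σ.trans Fin.revPerm) c where
  monotone := h.monotone
  surjective := h.surjective
  monotone_symm := Fin.rev_anti.comp (h.monotone_symm.comp_antitone Fin.rev_anti)

theorem isSkewDecomposable_iff {π : Equiv.Perm (Fin n)} :
    IsSkewDecomposable π ↔ IsSumDecomposable (π.trans Fin.revPerm) := by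
  refine exists_congr fun c => ⟨fun h => ?_, fun h => ?_⟩
  · convert h.trans_revPerm using 1
    decide
  · convert h.trans_revPerm using 1
    · ext
      simp
    · rfl

theorem card_not_isSkewDecomposable (n : ℕ) :
    Nat.card {π : Equiv.Perm (Fin n) // ¬ IsSkewDecomposable π} =
      Nat.card {π : Equiv.Perm (Fin n) // ¬ IsSumDecomposable π} :=
  Nat.card_congr <| (Equiv.mulLeft (Fin.revPerm : Equiv.Perm (Fin n))).subtypeEquiv fun _ =>
    not_congr isSkewDecomposable_iff

theorem card_not_isSumDecomposable_and_not_isSkewDecomposable (n : ℕ) :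
    n.factorial +
        Nat.card {π : Equiv.Perm (Fin n) // ¬ IsSumDecomposable π ∧ ¬ IsSkewDecomposable π} =
      2 * Nat.card {π : Equiv.Perm (Fin n) // ¬ IsSumDecomposable π} := by
  classical
  have hunion : {π : Equiv.Perm (Fin n) | ¬ IsSumDecomposable π} ∪
      {π | ¬ IsSkewDecomposable π} = Set.univ := by
    ext π
    simpa [← not_and_or] using IsSumDecomposable.not_isSkewDecomposable
  have := Set.ncard_union_add_ncard_inter {π : Equiv.Perm (Fin n) | ¬ IsSumDecomposable π}
    {π | ¬ IsSkewDecomposable π}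
  rw [hunion, Set.ncard_univ, Nat.card_perm, Nat.card_fin] at this
  rw [two_mul]
  exact this.trans (congrArg (_ + ·) (card_not_isSkewDecomposable n))

theorem exists_isInflation_hasTrivialBlocks_of_indecomposable (hn : 2 ≤ n)
    {π : Equiv.Perm (Fin n)} (hsum : ¬ IsSumDecomposable π) (hskew : ¬ IsSkewDecomposable π) :
    ∃ m ∈ Finset.Icc 3 n, ∃ (σ : Equiv.Perm (Fin m)) (c : Fin n → Fin m),
      HasTrivialBlocks σ ∧ IsInflation π σ c := by
  obtain ⟨m, hm, σ, c, hσ, h⟩ := exists_isInflation_hasTrivialBlocks hn π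
  have hmn : m ≤ n := by simpa using Fintype.card_le_of_surjective c h.surjective
  obtain rfl | hm := hm.eq_or_lt
  · exact (h.isSumDecomposable_or_isSkewDecomposable.elim hsum hskew).elim
  · exact ⟨m, Finset.mem_Icc.2 ⟨hm, hmn⟩, σ, c, hσ, h⟩

theorem IsInflation.not_hasTrivialBlocks {π : Equiv.Perm α} {τ : Equiv.Perm (Fin 2)}
    {g : α → Fin 2} (hτ : IsInflation π τ g) {σ : Equiv.Perm (Fin m)} {c : α → Fin m}
    (h : IsInflation π σ c) (hm : 3 ≤ m) : ¬ HasTrivialBlocks σ := fun hσ => by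
  have := hτ.card_le_card h hσ (by simpa)
  simp only [Fintype.card_fin] at this
  omega

end SumDecomposable

section DirectSum

variable {n k l : ℕ}

/-- `π` maps the first `k` positions to the first `k` values. -/
def PreservesPrefix (k : ℕ) (π : Equiv.Perm (Fin n)) : Prop :=
  ∀ i : Fin n, (i : ℕ) < k → (π i : ℕ) < k

theorem PreservesPrefix.symm {π : Equiv.Perm (Fin n)} (h : PreservesPrefix k π) :
    PreservesPrefix k π.symm :=
  fun _ hi => Equiv.Perm.perm_symm_on_of_perm_on_finite (p := fun j : Fin n => (j : ℕ) < k)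
    (fun j hj => h j hj) hi

theorem IsSumDecomposable.exists_preservesPrefix {π : Equiv.Perm (Fin n)}
    (h : IsSumDecomposable π) : ∃ k, 0 < k ∧ k < n ∧ PreservesPrefix k π := by
  obtain ⟨c, h⟩ := h
  obtain ⟨a, ha⟩ := h.surjective 0
  obtain ⟨k, hk, hmin⟩ := wellFounded_lt.has_min {i | c i = 1} (h.surjective 1)
  have hlt : ∀ i, i < k ↔ c i = 0 := fun i =>
    ⟨fun hi => by_contra fun h0 => hmin i (Fin.eq_one_of_ne_zero _ h0) hi,
      fun hi => h.monotone.reflect_lt (by simp [hi, hk.out])⟩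
  have hcπ : c ∘ π.symm = c :=
    Tuple.unique_monotone (f := c) (σ := π.symm) (τ := 1) h.monotone_symm h.monotone
  refine ⟨k, Nat.zero_lt_of_lt ((hlt a).2 ha), k.2, fun i hi => (hlt _).2 ?_⟩
  simpa [(hlt i).1 hi] using (congrFun hcπ (π i)).symm

theorem PreservesPrefix.isSumDecomposable {π : Equiv.Perm (Fin n)} (h : PreservesPrefix k π)
    (hk : 0 < k) (hkn : k < n) : IsSumDecomposable π := by
  have hmono : Monotone fun i : Fin n => if (i : ℕ) < k then (0 : Fin 2) else 1 := by
    intro i j (hij : (i : ℕ) ≤ j)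
    grind
  refine ⟨fun i => if (i : ℕ) < k then 0 else 1, hmono, fun b => ?_, ?_⟩
  · obtain rfl | rfl : b = 0 ∨ b = 1 := by omega
    · exact ⟨⟨0, hk.trans hkn⟩, by simp [hk]⟩
    · exact ⟨⟨k, hkn⟩, by simp⟩
  · have hπ : ∀ i, (π.symm i : ℕ) < k ↔ (i : ℕ) < k := fun i =>
      ⟨fun hi => by simpa using h _ hi, h.symm i⟩
    simpa [Function.comp_def, hπ] using hmono

theorem isSumDecomposable_iff {π : Equiv.Perm (Fin n)} :
    IsSumDecomposable π ↔ ∃ k, 0 < k ∧ k < n ∧ PreservesPrefix k π :=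
  ⟨IsSumDecomposable.exists_preservesPrefix, fun ⟨_, hk, hkn, h⟩ => h.isSumDecomposable hk hkn⟩

/-- The direct sum `p.1 ⊕ p.2`. -/
def directSum (p : Equiv.Perm (Fin k) × Equiv.Perm (Fin l)) : Equiv.Perm (Fin (k + l)) :=
  finSumFinEquiv.permCongr (Equiv.Perm.sumCongrHom _ _ p)

theorem directSum_castAdd (p : Equiv.Perm (Fin k) × Equiv.Perm (Fin l)) (i : Fin k) :
    directSum p (Fin.castAdd l i) = Fin.castAdd l (p.1 i) := by
  simp [directSum, Equiv.permCongr_apply]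

theorem directSum_injective : Function.Injective (directSum (k := k) (l := l)) :=
  finSumFinEquiv.permCongr.injective.comp Equiv.Perm.sumCongrHom_injective

theorem preservesPrefix_directSum_iff {j : ℕ} (hj : j ≤ k)
    (p : Equiv.Perm (Fin k) × Equiv.Perm (Fin l)) :
    PreservesPrefix j (directSum p) ↔ PreservesPrefix j p.1 := by
  refine ⟨fun h i hi => ?_, fun h i hi => ?_⟩
  · simpa [directSum_castAdd] using h (Fin.castAdd l i) hi
  · obtain ⟨i, rfl⟩ : ∃ i' : Fin k, i = Fin.castAdd l i' := ⟨⟨i, hi.trans_le hj⟩, rfl⟩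
    simpa [directSum_castAdd] using h i hi

theorem PreservesPrefix.exists_directSum_eq {π : Equiv.Perm (Fin (k + l))}
    (h : PreservesPrefix k π) : ∃ p, directSum p = π := by
  have hmaps : Set.MapsTo (finSumFinEquiv.symm.permCongr π) (Set.range Sum.inl)
      (Set.range (Sum.inl : Fin k → Fin k ⊕ Fin l)) := by
    rintro _ ⟨i, rfl⟩
    refine ⟨⟨π (Fin.castAdd l i), h _ i.2⟩, ?_⟩
    simp only [Equiv.permCongr_apply, Equiv.symm_symm, finSumFinEquiv_apply_left]
    rw [Equiv.eq_symm_apply]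
    rfl
  obtain ⟨p, hp⟩ := Equiv.Perm.mem_sumCongrHom_range_of_perm_mapsTo_inl hmaps
  exact ⟨p, by rw [directSum, hp]; ext; simp⟩

theorem isLeast_preservesPrefix_directSum_iff (p : Equiv.Perm (Fin k) × Equiv.Perm (Fin l)) :
    IsLeast {j | 0 < j ∧ PreservesPrefix j (directSum p)} k ↔
      0 < k ∧ ¬ IsSumDecomposable p.1 := by
  have hk : PreservesPrefix k (directSum p) :=
    (preservesPrefix_directSum_iff le_rfl p).2 fun i _ => (p.1 i).2
  rw [isSumDecomposable_iff]
  constructor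
  · rintro ⟨⟨hk0, -⟩, hle⟩
    refine ⟨hk0, fun ⟨j, hj, hjk, h⟩ => hjk.not_ge (hle ⟨hj, ?_⟩)⟩
    exact (preservesPrefix_directSum_iff hjk.le p).2 h
  · rintro ⟨hk0, hdec⟩
    refine ⟨⟨hk0, hk⟩, fun j ⟨hj, h⟩ => le_of_not_gt fun hjk => hdec ⟨j, hj, hjk, ?_⟩⟩
    exact (preservesPrefix_directSum_iff hjk.le p).1 h

/-- The number of sum-indecomposable permutations of length `n`; the empty permutation is not
regarded as indecomposable. -/
noncomputable def sumIndecomposableCount (n : ℕ) : ℕ :=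
  Nat.card {π : Equiv.Perm (Fin n) // 0 < n ∧ ¬ IsSumDecomposable π}

theorem card_isLeast_preservesPrefix :
    Nat.card {π : Equiv.Perm (Fin (k + l)) // IsLeast {j | 0 < j ∧ PreservesPrefix j π} k} =
      sumIndecomposableCount k * l.factorial := by
  rw [← Nat.card_fin l, ← Nat.card_perm, Nat.card_fin, sumIndecomposableCount, ← Nat.card_prod]
  refine (Nat.card_congr (Equiv.ofBijective (fun q => ⟨directSum (q.1.1, q.2),
    (isLeast_preservesPrefix_directSum_iff _).2 q.1.2⟩) ⟨?_, ?_⟩)).symm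
  · rintro ⟨⟨a, ha⟩, b⟩ ⟨⟨a', ha'⟩, b'⟩ h
    simpa using directSum_injective (Subtype.mk.inj h)
  · rintro ⟨π, h⟩
    obtain ⟨p, rfl⟩ := h.1.2.exists_directSum_eq
    exact ⟨⟨⟨p.1, (isLeast_preservesPrefix_directSum_iff p).1 h⟩, p.2⟩, rfl⟩

theorem factorial_eq_sum_sumIndecomposableCount (hn : 0 < n) : n.factorial =
    ∑ p ∈ Finset.HasAntidiagonal.antidiagonal n, sumIndecomposableCount p.1 * p.2.factorial := by
  classical
  let cut : Equiv.Perm (Fin n) → ℕ := fun π => sInf {j | 0 < j ∧ PreservesPrefix j π}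
  have hcut : ∀ π, IsLeast {j | 0 < j ∧ PreservesPrefix j π} (cut π) := fun π =>
    ⟨Nat.sInf_mem ⟨n, hn, fun i _ => (π i).2⟩, fun _ => Nat.sInf_le⟩
  have hcut_iff : ∀ π k, IsLeast {j | 0 < j ∧ PreservesPrefix j π} k ↔ cut π = k := fun π k =>
    ⟨fun h => (hcut π).unique h, fun h => h ▸ hcut π⟩
  have hcut_le : ∀ π, cut π ≤ n := fun π => (hcut π).2 ⟨hn, fun i _ => (π i).2⟩
  have hcard := Finset.card_eq_sum_card_fiberwise (s := Finset.univ)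
    (f := fun π => (cut π, n - cut π)) (t := Finset.HasAntidiagonal.antidiagonal n) fun π _ => by
      simpa using Nat.add_sub_cancel' (hcut_le π)
  rw [Finset.card_univ, Fintype.card_perm, Fintype.card_fin] at hcard
  rw [hcard]
  refine Finset.sum_congr rfl fun ⟨k, l⟩ hkl => ?_
  obtain rfl := Finset.HasAntidiagonal.mem_antidiagonal.1 hkl
  rw [← card_isLeast_preservesPrefix, Nat.subtype_card]
  intro π
  rw [Finset.mem_filter, Prod.mk.injEq, hcut_iff]
  simp only [Finset.mem_univ, true_and]
  omega

/-- The generating function of the sum-indecomposable permutations. -/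
noncomputable def sumIndecomposableSeries : ℚ⟦X⟧ :=
  PowerSeries.mk fun n => (sumIndecomposableCount n : ℚ)

theorem factorialSeries_eq_sumIndecomposableSeries_mul :
    factorialSeries = sumIndecomposableSeries * (1 + factorialSeries) := by
  ext n
  have hfactorial : ∀ l, PowerSeries.coeff l (1 + factorialSeries) = (l.factorial : ℚ) := by
    intro l
    by_cases hl : l = 0 <;> simp [hl, PowerSeries.coeff_one]
  simp only [PowerSeries.coeff_mul, hfactorial, sumIndecomposableSeries, PowerSeries.coeff_mk]
  obtain rfl | hn := n.eq_zero_or_pos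
  · simp [sumIndecomposableCount]
  · simp [hn.ne', factorial_eq_sum_sumIndecomposableCount hn]

end DirectSum

section CountingInflations

variable {n m : ℕ}

theorem card_monotone_comp (f : Fin n → Fin m) :
    Nat.card {τ : Equiv.Perm (Fin n) // Monotone (f ∘ τ)} =
      ∏ i, (Fintype.card {a // f a = i}).factorial := by
  rw [← DomMulAct.stabilizer_card f, ← Nat.card_eq_fintype_card]
  refine Nat.card_congr ((Equiv.mulRight (Tuple.sort f)⁻¹).subtypeEquiv fun τ => ?_)
  rw [← Tuple.comp_sort_eq_comp_iff_monotone, Equiv.coe_mulRight, Equiv.Perm.coe_mul,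
    ← Function.comp_assoc]
  exact ((Tuple.sort f).comp_symm_eq _ _).symm

theorem eq_of_monotone_of_card_fiber_eq {c c' : Fin n → Fin m} (hc : Monotone c) (hc' : Monotone c')
    (h : ∀ i, Fintype.card {a // c a = i} = Fintype.card {a // c' a = i}) : c = c' := by
  let e : Equiv.Perm (Fin n) := Equiv.ofFiberEquiv fun i => Fintype.equivOfCardEq (h i)
  have he : c' ∘ e = c := funext (Equiv.ofFiberEquiv_map _)
  rw [← he] at hc ⊢
  exact Tuple.unique_monotone (τ := 1) hc hc'

theorem exists_monotone_card_fiber_eq (l : Fin m → ℕ) (hl : ∑ i, l i = n) :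
    ∃ c : Fin n → Fin m, Monotone c ∧ ∀ i, Fintype.card {a // c a = i} = l i := by
  have e : Fin n ≃ Σ i : Fin m, Fin (l i) := Fintype.equivOfCardEq (by simp [hl])
  refine ⟨(Sigma.fst ∘ e) ∘ Tuple.sort (Sigma.fst ∘ e), Tuple.monotone_sort _, fun i => ?_⟩
  rw [← Fintype.card_fin (l i)]
  refine Fintype.card_congr (Equiv.trans ?_ (Equiv.sigmaSubtype (β := fun i => Fin (l i)) i))
  exact ((Tuple.sort (Sigma.fst ∘ e)).trans e).subtypeEquiv fun _ => Iff.rfl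

theorem sum_monotone_prod_card_fiber {R : Type*} [CommSemiring R] (a : ℕ → R) :
    ∑ c : {c : Fin n → Fin m // Monotone c}, ∏ i, a (Fintype.card {x // c.1 x = i}) =
      PowerSeries.coeff n (PowerSeries.mk a ^ m) := by
  rw [← Fin.prod_const, PowerSeries.coeff_prod]
  refine Finset.sum_bij (fun c _ => Finsupp.equivFunOnFinite.symm
    fun i => Fintype.card {x // c.1 x = i}) ?_ ?_ ?_ ?_
  · intro c _
    rw [Finset.mem_finsuppAntidiag]
    refine ⟨?_, Finset.subset_univ _⟩
    simp only [Finsupp.equivFunOnFinite_symm_apply_apply]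
    rw [← Fintype.card_sigma, Fintype.card_congr (Equiv.sigmaFiberEquiv c.1), Fintype.card_fin]
  · intro c _ c' _ h
    exact Subtype.ext (eq_of_monotone_of_card_fiber_eq c.2 c'.2 (congrFun (Equiv.injective _ h)))
  · intro l hl
    obtain ⟨c, hc, hcl⟩ := exists_monotone_card_fiber_eq l (Finset.mem_finsuppAntidiag.1 hl).1
    exact ⟨⟨c, hc⟩, Finset.mem_univ _, Finsupp.ext hcl⟩
  · intro c _
    simp

/-- The factor `0` of `factorialSeries` in degree `0` discards the maps missing a value. -/
theorem prod_coeff_factorialSeries_card_fiber (c : Fin n → Fin m)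
    [Decidable (Function.Surjective c)] :
    ∏ i, PowerSeries.coeff (Fintype.card {x // c x = i}) factorialSeries =
      if Function.Surjective c then ∏ i, ((Fintype.card {x // c x = i}).factorial : ℚ) else 0 := by
  have hne : ∀ i, Fintype.card {x // c x = i} = 0 ↔ ∀ x, c x ≠ i := fun i => by
    rw [Fintype.card_eq_zero_iff, isEmpty_subtype]
  split_ifs with hc
  · refine Finset.prod_congr rfl fun i _ => ?_
    obtain ⟨x, hx⟩ := hc i
    rw [coeff_factorialSeries, if_neg fun h => (hne i).1 h x hx]
  · simp only [Function.Surjective, not_forall, not_exists] at hc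
    obtain ⟨i, hi⟩ := hc
    refine Finset.prod_eq_zero (Finset.mem_univ i) ?_
    rw [coeff_factorialSeries, if_pos ((hne i).2 hi)]

theorem card_monotone_perm_comp (σ : Equiv.Perm (Fin m)) (c : Fin n → Fin m) :
    Nat.card {τ : Equiv.Perm (Fin n) // Monotone (σ ∘ c ∘ τ)} =
      ∏ i, (Fintype.card {a // c a = i}).factorial := by
  rw [← Equiv.prod_comp σ.symm]
  refine (card_monotone_comp (σ ∘ c)).trans (Finset.prod_congr rfl fun i _ => congrArg _ ?_)
  exact Fintype.card_congr (Equiv.subtypeEquivRight fun _ => σ.eq_symm_apply.symm)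

/-- Inflations `(π, c)` of `σ`, listed by `c` and `π⁻¹`. -/
def inflationEquiv (σ : Equiv.Perm (Fin m)) :
    {p : Equiv.Perm (Fin n) × (Fin n → Fin m) // IsInflation p.1 σ p.2} ≃
      Σ c : {c : {c : Fin n → Fin m // Monotone c} // Function.Surjective c.1},
        {τ : Equiv.Perm (Fin n) // Monotone (σ ∘ c.1.1 ∘ τ)} where
  toFun p := ⟨⟨⟨p.1.2, p.2.monotone⟩, p.2.surjective⟩, ⟨p.1.1.symm, p.2.monotone_symm⟩⟩
  invFun q := ⟨⟨q.2.1.symm, q.1.1.1⟩, q.1.1.2, q.1.2, q.2.2⟩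

theorem card_isInflation (σ : Equiv.Perm (Fin m)) :
    (Nat.card {p : Equiv.Perm (Fin n) × (Fin n → Fin m) // IsInflation p.1 σ p.2} : ℚ) =
      PowerSeries.coeff n (factorialSeries ^ m) := by
  classical
  rw [Nat.card_congr (inflationEquiv σ), Nat.card_sigma]
  have hmk : factorialSeries = PowerSeries.mk fun k => PowerSeries.coeff k factorialSeries := by
    ext
    simp
  rw [hmk, ← sum_monotone_prod_card_fiber]
  simp only [prod_coeff_factorialSeries_card_fiber, card_monotone_perm_comp]
  push_cast
  rw [← Finset.sum_filter, ← Finset.sum_subtype_eq_sum_filter, Finset.subtype_univ]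

end CountingInflations

section SimpleCount

theorem coeff_subst_eq_sum_range {R : Type*} [CommRing R] {f : R⟦X⟧}
    (hf : PowerSeries.constantCoeff f = 0) (g : R⟦X⟧) (n : ℕ) :
    PowerSeries.coeff n (g.subst f) =
      ∑ m ∈ Finset.range (n + 1), PowerSeries.coeff m g * PowerSeries.coeff n (f ^ m) := by
  rw [PowerSeries.coeff_subst' (.of_constantCoeff_zero' hf)]
  refine finsum_eq_sum_of_support_subset _ fun m hm => ?_
  rw [Finset.coe_range, Set.mem_Iio, Nat.lt_succ_iff]
  by_contra! hnm
  refine hm ?_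
  have hdvd := pow_dvd_pow_of_dvd (PowerSeries.X_dvd_iff.2 hf) m
  simp only [PowerSeries.X_pow_dvd_iff.1 hdvd n hnm, smul_zero]

/-- The substitution decomposition: a sum- and skew-indecomposable permutation is an inflation of
exactly one simple permutation. -/
noncomputable def simpleInflationEquiv {n : ℕ} (hn : 2 ≤ n) :
    (Σ m : Finset.Icc 3 n, Σ σ : {σ : Equiv.Perm (Fin m) // IsSimplePerm σ},
        {p : Equiv.Perm (Fin n) × (Fin n → Fin m) // IsInflation p.1 σ.1 p.2}) ≃
      {π : Equiv.Perm (Fin n) // ¬ IsSumDecomposable π ∧ ¬ IsSkewDecomposable π} := by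
  refine Equiv.ofBijective (fun ⟨m, σ, p⟩ => ⟨p.1.1, ?_, ?_⟩) ⟨?_, ?_⟩
  · rintro ⟨c, hc⟩
    exact hc.not_hasTrivialBlocks p.2 (Finset.mem_Icc.1 m.2).1 (isSimplePerm_iff.1 σ.2)
  · rintro ⟨c, hc⟩
    exact hc.not_hasTrivialBlocks p.2 (Finset.mem_Icc.1 m.2).1 (isSimplePerm_iff.1 σ.2)
  · rintro ⟨⟨m, hm⟩, ⟨σ, hσ⟩, ⟨⟨π, c⟩, h⟩⟩ ⟨⟨m', hm'⟩, ⟨σ', hσ'⟩, ⟨⟨π', c'⟩, h'⟩⟩ heq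
    obtain rfl : π = π' := Subtype.mk.inj heq
    cases h.unique h' (isSimplePerm_iff.1 hσ) (isSimplePerm_iff.1 hσ') (Finset.mem_Icc.1 hm).1
      (Finset.mem_Icc.1 hm').1
    rfl
  · rintro ⟨π, hsum, hskew⟩
    obtain ⟨m, hm, σ, c, hσ, h⟩ :=
      exists_isInflation_hasTrivialBlocks_of_indecomposable hn hsum hskew
    exact ⟨⟨⟨m, hm⟩, ⟨σ, isSimplePerm_iff.2 hσ⟩, ⟨⟨π, c⟩, h⟩⟩, rfl⟩

theorem card_not_decomposable_eq_sum_simpleCount {n : ℕ} (hn : 2 ≤ n) :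
    (Nat.card {π : Equiv.Perm (Fin n) // ¬ IsSumDecomposable π ∧ ¬ IsSkewDecomposable π} : ℚ) =
      ∑ m ∈ Finset.Icc 3 n, (simpleCount m : ℚ) * PowerSeries.coeff n (factorialSeries ^ m) := by
  classical
  rw [← Nat.card_congr (simpleInflationEquiv hn), Nat.card_sigma, Nat.cast_sum,
    ← Finset.sum_coe_sort (Finset.Icc 3 n)]
  refine Finset.sum_congr rfl fun m _ => ?_
  rw [Nat.card_sigma, Nat.cast_sum]
  simp only [card_isInflation]
  rw [Finset.sum_const, nsmul_eq_mul, simpleCount, Nat.card_eq_fintype_card, Finset.card_univ]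

theorem sumIndecomposableCount_one : sumIndecomposableCount 1 = 1 := by
  have h0 : sumIndecomposableCount 0 = 0 := by simp [sumIndecomposableCount]
  simpa [Finset.Nat.sum_antidiagonal_eq_sum_range_succ_mk, Finset.sum_range_succ, h0] using
    (factorial_eq_sum_sumIndecomposableCount one_pos).symm

theorem sum_simpleCount_eq (n : ℕ) :
    ∑ m ∈ Finset.Icc 3 n, (simpleCount m : ℚ) * PowerSeries.coeff n (factorialSeries ^ m) =
      PowerSeries.coeff n (2 * sumIndecomposableSeries - factorialSeries - PowerSeries.X) := by
  rw [two_mul, map_sub, map_sub, map_add, sumIndecomposableSeries, PowerSeries.coeff_mk,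
    coeff_factorialSeries, PowerSeries.coeff_X]
  obtain rfl | rfl | hn : n = 0 ∨ n = 1 ∨ 2 ≤ n := by omega
  · simp [sumIndecomposableCount]
  · norm_num [sumIndecomposableCount_one]
  · have h := card_not_isSumDecomposable_and_not_isSkewDecomposable n
    have hcount : Nat.card {π : Equiv.Perm (Fin n) // ¬ IsSumDecomposable π} =
        sumIndecomposableCount n := by
      simp only [sumIndecomposableCount, show 0 < n by omega, true_and]
    rw [← card_not_decomposable_eq_sum_simpleCount hn, if_neg (by omega), if_neg (by omega)]
    rw [hcount, ← @Nat.cast_inj ℚ] at h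
    push_cast at h
    linear_combination h

/-- The generating function of the simple permutations. -/
noncomputable def simpleSeries : ℚ⟦X⟧ :=
  PowerSeries.mk fun n => (simpleCount n : ℚ)

theorem simpleSeries_sub_trunc_subst_factorialSeries :
    (simpleSeries - (simpleSeries.trunc 3 : ℚ⟦X⟧)).subst factorialSeries =
      2 * sumIndecomposableSeries - factorialSeries - PowerSeries.X := by
  ext n
  rw [← sum_simpleCount_eq, coeff_subst_eq_sum_range constantCoeff_factorialSeries]
  have hIcc : (Finset.range (n + 1)).filter (3 ≤ ·) = Finset.Icc 3 n := by
    ext m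
    simp only [Finset.mem_filter, Finset.mem_range, Finset.mem_Icc]
    omega
  have hcoeff : ∀ m, PowerSeries.coeff m (simpleSeries - (simpleSeries.trunc 3 : ℚ⟦X⟧)) =
      if 3 ≤ m then (simpleCount m : ℚ) else 0 := by
    intro m
    rw [map_sub, coeff_coe, PowerSeries.coeff_trunc, simpleSeries, PowerSeries.coeff_mk]
    split_ifs <;> first | omega | simp
  simp only [hcoeff, ite_mul, zero_mul]
  rw [← Finset.sum_filter, hIcc]

theorem aeval_mul_simpleSeries_subst_add_X :
    aeval factorialSeries (1 + X : ℚ[X]) * (simpleSeries.subst factorialSeries + PowerSeries.X) =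
      aeval factorialSeries ((1 + X) * (simpleSeries.trunc 3 - X) + 2 * X) := by
  have h := simpleSeries_sub_trunc_subst_factorialSeries
  rw [PowerSeries.subst_sub hasSubst_factorialSeries,
    PowerSeries.subst_coe hasSubst_factorialSeries] at h
  simp only [map_add, map_mul, map_sub, map_one, aeval_X, map_ofNat]
  linear_combination (1 + factorialSeries) * h - 2 * factorialSeries_eq_sumIndecomposableSeries_mul

end SimpleCount

/-- The sequence `(sₙ)_{n≥1}` of numbers of simple permutations is not P-recursive. -/
theorem simpleCount_not_PRecursive :
    ¬ IsPRecursive (fun n => (simpleCount n : ℚ)) := by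
  intro h
  have hq : (1 + X : ℚ[X]) ≠ 0 := fun h0 => by simpa using congrArg (coeff · 0) h0
  exact not_isDFinite_of_aeval_mul_subst_add_X_eq hq aeval_mul_simpleSeries_subst_add_X h.isDFinite
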